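/- The averaged reconstruction α_W, defined by α_W(g) = (1/|W|) Σ_{i ∈ W} α_{W,i}(g), satisfies: (a) for every extendable de Bruijn density g ∈ D^W_dBe, α_W(g) is a density on E^{V+W}; (b) for every g in the image of β_W, α_W(g) = α_{W,i}(g) for every i ∈ W. -/

import Mathlib

open Finset
open scoped Classical

/-- Patterns over the integer interval `{A,...,B}` with values in `E`. -/
abbrev Pat (E : Type) (A B : ℤ) : Type := {x // x ∈ Finset.Icc A B} → E

/-- Evaluation of a pattern at an integer site (arbitrary value outside the domain). -/
noncomputable def ev {E : Type} [Nonempty E] {A B : ℤ} (φ : Pat E A B) (j : ℤ) : E :=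
  if h : j ∈ Finset.Icc A B then φ ⟨j, h⟩ else Classical.arbitrary E

/-- The window `σ_i(φ)|_V` of a pattern `φ`, a pattern on `V = {-p,...,q}`. -/
noncomputable def win {E : Type} [Nonempty E] (p q : ℕ) {A B : ℤ} (i : ℤ) (φ : Pat E A B) :
    Pat E (-(p : ℤ)) (q : ℤ) :=
  fun v => ev φ (i + v.1)

/-- A density on a finite type: nonnegative weights summing to one. -/
def IsDensity {α : Type} [Fintype α] (g : α → ℝ) : Prop :=
  (∀ x, 0 ≤ g x) ∧ ∑ x, g x = 1

/-- The distribution associated with a weight function, evaluated on an event. -/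
noncomputable def Pr {α : Type} [Fintype α] (g : α → ℝ) (P : α → Prop) : ℝ :=
  ∑ x, if P x then g x else 0

/-- Conditional probability `μ[P | Q] = μ[P ∩ Q]/μ[Q]` (`0` if `0/0`). -/
noncomputable def condPr {α : Type} [Fintype α] (g : α → ℝ) (P Q : α → Prop) : ℝ :=
  Pr g (fun x => P x ∧ Q x) / Pr g Q

/-- The marginalization operator `β_W`. -/
noncomputable def beta {E : Type} [Fintype E] [DecidableEq E] [Nonempty E]
    (p q : ℕ) (t u : ℤ) (g : Pat E (-(p : ℤ) - t) ((q : ℤ) + u) → ℝ) (i : ℤ)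
    (ψ : Pat E (-(p : ℤ)) (q : ℤ)) : ℝ :=
  Pr g (fun χ => win p q i χ = ψ)

/-- The reconstruction operator `α_{W,i}`. -/
noncomputable def alpha {E : Type} [Fintype E] [DecidableEq E] [Nonempty E]
    (p q : ℕ) (t u : ℤ) (g : ℤ → Pat E (-(p : ℤ)) (q : ℤ) → ℝ) (i : ℤ)
    (ψ : Pat E (-(p : ℤ) - t) ((q : ℤ) + u)) : ℝ :=
  (∏ k ∈ Finset.Icc (-t) (i - 1),
      condPr (g k) (fun χ => ev χ (-(p : ℤ)) = ev ψ (k + -(p : ℤ)))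
        (fun χ => ∀ v ∈ Finset.Icc (-(p : ℤ) + 1) (q : ℤ), ev χ v = ev ψ (k + v))) *
    g i (win p q i ψ) *
    (∏ l ∈ Finset.Icc (i + 1) u,
      condPr (g l) (fun χ => ev χ (q : ℤ) = ev ψ (l + (q : ℤ)))
        (fun χ => ∀ v ∈ Finset.Icc (-(p : ℤ)) ((q : ℤ) - 1), ev χ v = ev ψ (l + v)))

/-- Extendable de Bruijn densities. -/
def Extendable {E : Type} [Fintype E] [DecidableEq E] [Nonempty E]
    (p q : ℕ) (t u : ℤ) (g : ℤ → Pat E (-(p : ℤ)) (q : ℤ) → ℝ) : Prop :=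
  ∀ i ∈ Finset.Icc (-t) u, ∀ φ, 0 < g i φ →
    ∃ ψ : Pat E (-(p : ℤ) - t) ((q : ℤ) + u),
      win p q i ψ = φ ∧ ∀ j ∈ Finset.Icc (-t) u, 0 < g j (win p q j ψ)

/-- The event `{χ : χ|_S = ψ|_S}`. -/
def agreeOn {E : Type} [Nonempty E] {A B : ℤ} (S : Finset ℤ) (ψ χ : Pat E A B) : Prop :=
  ∀ j ∈ S, ev χ j = ev ψ j

/-- The averaged reconstruction `α_W`. -/
noncomputable def alphaBar {E : Type} [Fintype E] [DecidableEq E] [Nonempty E]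
    (p q : ℕ) (t u : ℤ) (g : ℤ → Pat E (-(p : ℤ)) (q : ℤ) → ℝ)
    (ψ : Pat E (-(p : ℤ) - t) ((q : ℤ) + u)) : ℝ :=
  (((Finset.Icc (-t) u).card : ℝ))⁻¹ * ∑ i ∈ Finset.Icc (-t) u, alpha p q t u g i ψ

/-!
Each factor of `α_{W,i}` is the conditional weight of an end site of a window given the rest of that
window. Summing the last factor of a chain of windows over its new end site gives `1`, provided that
the conditioning event has positive weight, and this is what extendability guarantees. Hence the
windows to the right of `i`, then those to the left, can be summed out one at a time until only the
total weight of `g(i)` is left. To stay on the fixed pattern space `E^{V+W}`, a site is summed out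
by resampling it uniformly, at the cost of a factor `|E|`; these factors cancel in the end.

The weights `α_{W,i}` and `α_{W,i+1}` differ in one denominator only: the product `g(i) g(i+1)` is
divided by a marginal on the overlap of the two windows, that of `g(i)` in `α_{W,i+1}` and that of
`g(i+1)` in `α_{W,i}`. For images of `β_W` these marginals agree.
-/

section Resampling

variable {α β ι κ E R : Type*} [CommSemiring R]

lemma card_mul_sum_eq_sum_sum_of_get_put [Fintype α] [Fintype β] (get : α → β) (put : α → β → α)
    (get_put : ∀ a b, get (put a b) = b) (put_put_get : ∀ a b, put (put a b) (get a) = a)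
    (G : α → R) : Fintype.card β * ∑ a, G a = ∑ a, ∑ b, G (put a b) := by
  let swap : α × β ≃ α × β := Function.Involutive.toPerm (fun x ↦ (put x.1 x.2, get x.1))
    fun x ↦ by simp only [get_put, put_put_get]
  calc Fintype.card β * ∑ a, G a = ∑ x : α × β, G x.1 := by
        simp [Fintype.sum_prod_type, Finset.mul_sum]
    _ = ∑ x : α × β, G (swap x).1 := (Equiv.sum_comp swap fun x ↦ G x.1).symm
    _ = ∑ a, ∑ b, G (put a b) := Fintype.sum_prod_type _

variable [Fintype ι] [DecidableEq ι] [Fintype E]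

lemma card_mul_sum_comp_of_injective [Fintype κ] [DecidableEq κ] {τ : κ → ι}
    (hτ : Function.Injective τ) (g : (κ → E) → R) :
    Fintype.card (κ → E) * ∑ x : ι → E, g (x ∘ τ) = Fintype.card (ι → E) * ∑ y, g y := by
  have get_put (x : ι → E) (y : κ → E) : Function.extend τ y x ∘ τ = y :=
    Function.extend_comp hτ _ _
  have put_put_get (x : ι → E) (y : κ → E) :
      Function.extend τ (x ∘ τ) (Function.extend τ y x) = x := by
    ext v
    by_cases hv : ∃ a, τ a = v
    · obtain ⟨a, rfl⟩ := hv
      exact hτ.extend_apply _ _ a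
    · simp only [Function.extend_apply' _ _ _ hv]
  rw [card_mul_sum_eq_sum_sum_of_get_put (· ∘ τ) (fun x y ↦ Function.extend τ y x) get_put
    put_put_get]
  simp [get_put]

lemma card_mul_sum_mul_of_sum_update_eq_one (j : ι) {F C : (ι → E) → R}
    (hF : ∀ x e, F (Function.update x j e) = F x)
    (hC : ∀ x, F x ≠ 0 → ∑ e, C (Function.update x j e) = 1) :
    Fintype.card E * ∑ x, F x * C x = ∑ x, F x := by
  rw [card_mul_sum_eq_sum_sum_of_get_put (fun x : ι → E ↦ x j)
    (fun x e ↦ Function.update x j e) (by simp) (by simp)]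
  refine Finset.sum_congr rfl fun x _ ↦ ?_
  simp only [hF, ← Finset.mul_sum]
  by_cases hx : F x = 0
  · simp [hx]
  · rw [hC x hx, mul_one]

end Resampling

section Conditioning

variable {κ E : Type*} [DecidableEq κ] [Fintype E]

/-- The marginal of the weight `g` on the complement of the site `s`, evaluated at the restriction
of `x`; the value `x s` is irrelevant. -/
noncomputable def marginalOff (g : (κ → E) → ℝ) (s : κ) (x : κ → E) : ℝ :=
  ∑ e, g (Function.update x s e)

/-- The conditional weight of the value of `x` at the site `s` given the values of `x` at all other
sites. It is `0` when `marginalOff g s x = 0`. -/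
noncomputable def condAt (g : (κ → E) → ℝ) (s : κ) (x : κ → E) : ℝ :=
  g x / marginalOff g s x

variable {g : (κ → E) → ℝ} {s : κ} {x : κ → E}

lemma condAt_nonneg (hg : ∀ y, 0 ≤ g y) (s : κ) (x : κ → E) : 0 ≤ condAt g s x :=
  div_nonneg (hg x) (Finset.sum_nonneg fun _ _ ↦ hg _)

lemma ne_zero_of_condAt_ne_zero (h : condAt g s x ≠ 0) : g x ≠ 0 :=
  left_ne_zero_of_mul h

lemma sum_condAt_update (h : marginalOff g s x ≠ 0) :
    ∑ e, condAt g s (Function.update x s e) = 1 := by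
  simp only [condAt, marginalOff, Function.update_idem, ← Finset.sum_div]
  exact div_self h

lemma marginalOff_pos_of_forall_ne (hg : ∀ y, 0 ≤ g y) {y : κ → E} (hy : 0 < g y)
    (hyx : ∀ v, v ≠ s → y v = x v) : 0 < marginalOff g s x := by
  refine Finset.sum_pos' (fun _ _ ↦ hg _) ⟨y s, Finset.mem_univ _, ?_⟩
  rwa [← Function.eq_update_iff.2 ⟨rfl, hyx⟩]

lemma sum_pr_update {α κ E : Type} [Fintype α] [DecidableEq κ] [Fintype E] (g : α → ℝ)
    (f : α → κ → E) (s : κ) (x : κ → E) :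
    ∑ e, Pr g (fun a ↦ f a = Function.update x s e) = Pr g (fun a ↦ ∀ v, v ≠ s → f a v = x v) := by
  simp only [Pr, Function.eq_update_iff, ite_and]
  rw [Finset.sum_comm]
  simp

lemma pr_singleton {α : Type} [Fintype α] (g : α → ℝ) (a : α) : Pr g (fun b ↦ b = a) = g a := by
  simp [Pr]

lemma condPr_eq_condAt {κ E : Type} [Fintype κ] [DecidableEq κ] [Fintype E]
    (g : (κ → E) → ℝ) (s : κ) (x : κ → E) :
    condPr g (fun y ↦ y s = x s) (fun y ↦ ∀ v, v ≠ s → y v = x v) = condAt g s x := by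
  have agree_iff (y : κ → E) : (y s = x s ∧ ∀ v, v ≠ s → y v = x v) ↔ y = x := by
    rw [← Function.eq_update_iff, Function.update_eq_self]
  simp only [condPr, condAt, marginalOff, agree_iff, ← sum_pr_update g (fun y ↦ y), pr_singleton]

end Conditioning

section Windows

variable {E : Type} {A B : ℤ} {p q : ℕ}

/-- The site `-p` of the window `V = {-p,...,q}`. -/
abbrev leftEnd (p q : ℕ) : {x // x ∈ Finset.Icc (-(p : ℤ)) (q : ℤ)} :=
  ⟨-p, Finset.mem_Icc.2 ⟨le_rfl, by omega⟩⟩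

/-- The site `q` of the window `V = {-p,...,q}`. -/
abbrev rightEnd (p q : ℕ) : {x // x ∈ Finset.Icc (-(p : ℤ)) (q : ℤ)} :=
  ⟨q, Finset.mem_Icc.2 ⟨by omega, le_rfl⟩⟩

lemma card_pat [Fintype E] (hAB : A ≤ B) :
    (Fintype.card (Pat E A B) : ℝ) = (Fintype.card E : ℝ) ^ (B + 1 - A) := by
  rw [Fintype.card_fun, Fintype.card_coe, Int.card_Icc, Nat.cast_pow, ← zpow_natCast,
    Int.toNat_of_nonneg (by omega)]

variable [Nonempty E]

lemma ev_coe (φ : Pat E A B) (j : {x // x ∈ Finset.Icc A B}) : ev φ j = φ j :=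
  dif_pos j.2

lemma ev_update (φ : Pat E A B) (j : {x // x ∈ Finset.Icc A B}) (e : E) (k : ℤ) :
    ev (Function.update φ j e) k = if k = j then e else ev φ k := by
  split_ifs with hk
  · rw [hk, ev_coe, Function.update_self]
  · simp only [ev]
    split_ifs with hmem
    · rw [Function.update_of_ne fun h ↦ hk (congrArg Subtype.val h)]
    · rfl

lemma win_update (ψ : Pat E A B) (k : ℤ) (s : {x // x ∈ Finset.Icc (-(p : ℤ)) (q : ℤ)})
    (hs : k + s ∈ Finset.Icc A B) (e : E) :
    win p q k (Function.update ψ ⟨k + s, hs⟩ e) = Function.update (win p q k ψ) s e := by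
  ext v
  rw [win, ev_update, Function.update_apply]
  exact if_congr (add_right_inj k |>.trans Subtype.ext_iff.symm) rfl rfl

lemma win_update_of_notMem (ψ : Pat E A B) {k : ℤ} {j : {x // x ∈ Finset.Icc A B}}
    (hj : (j : ℤ) ∉ Finset.Icc (k - p) (k + q)) (e : E) :
    win p q k (Function.update ψ j e) = win p q k ψ := by
  ext ⟨v, hv⟩
  rw [Finset.mem_Icc] at hj hv
  rw [win, ev_update, if_neg (by dsimp only; omega), win]

lemma sum_comp_win [Fintype E] {i : ℤ} (hA : A ≤ i - p) (hB : i + q ≤ B)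
    (g : Pat E (-(p : ℤ)) (q : ℤ) → ℝ) :
    ∑ ψ : Pat E A B, g (win p q i ψ) =
      (Fintype.card E : ℝ) ^ (B - A - p - q) * ∑ φ, g φ := by
  have hE : (Fintype.card E : ℝ) ≠ 0 := Nat.cast_ne_zero.2 Fintype.card_ne_zero
  let τ (v : {x // x ∈ Finset.Icc (-(p : ℤ)) (q : ℤ)}) : {x // x ∈ Finset.Icc A B} :=
    ⟨i + v, by have := Finset.mem_Icc.1 v.2; exact Finset.mem_Icc.2 ⟨by omega, by omega⟩⟩
  have hτ : Function.Injective τ := fun v w h ↦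
    Subtype.ext (add_left_cancel (congrArg Subtype.val h))
  have win_eq (ψ : Pat E A B) : win p q i ψ = ψ ∘ τ := funext fun v ↦ ev_coe ψ (τ v)
  have card_mul_sum := card_mul_sum_comp_of_injective hτ g
  rw [card_pat (by omega), card_pat (by omega)] at card_mul_sum
  simp only [win_eq]
  refine mul_left_cancel₀ (zpow_ne_zero ((q : ℤ) + 1 - -p) hE) (card_mul_sum.trans ?_)
  rw [← mul_assoc, ← zpow_add₀ hE]
  congr 2
  ring

lemma condPr_eq_condAt_win [Fintype E] (g : Pat E (-(p : ℤ)) (q : ℤ) → ℝ) (ψ : Pat E A B) (k : ℤ)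
    (s : {x // x ∈ Finset.Icc (-(p : ℤ)) (q : ℤ)}) {S : Finset ℤ}
    (hS : S = (Finset.Icc (-(p : ℤ)) (q : ℤ)).erase s) :
    condPr g (fun χ ↦ ev χ s = ev ψ (k + s)) (fun χ ↦ ∀ v ∈ S, ev χ v = ev ψ (k + v)) =
      condAt g s (win p q k ψ) := by
  have agree_iff (χ : Pat E (-(p : ℤ)) (q : ℤ)) :
      (∀ v ∈ S, ev χ v = ev ψ (k + v)) ↔ ∀ v, v ≠ s → χ v = win p q k ψ v := by
    subst hS
    refine ⟨fun h v hv ↦ ?_, fun h v hv ↦ ?_⟩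
    · rw [← ev_coe χ]
      exact h v (Finset.mem_erase.2 ⟨Subtype.coe_ne_coe.2 hv, v.2⟩)
    · obtain ⟨hne, hv⟩ := Finset.mem_erase.1 hv
      exact (ev_coe χ ⟨v, hv⟩).trans (h ⟨v, hv⟩ (Subtype.coe_ne_coe.1 hne))
  simp only [agree_iff, ev_coe]
  exact condPr_eq_condAt g s (win p q k ψ)

lemma card_mul_sum_mul_condAt_win [Fintype E] (g : Pat E (-(p : ℤ)) (q : ℤ) → ℝ) (k : ℤ)
    (s : {x // x ∈ Finset.Icc (-(p : ℤ)) (q : ℤ)}) (hs : k + s ∈ Finset.Icc A B)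
    {F : Pat E A B → ℝ} (hF : ∀ ψ e, F (Function.update ψ ⟨k + s, hs⟩ e) = F ψ)
    (hpos : ∀ ψ, F ψ ≠ 0 → 0 < marginalOff g s (win p q k ψ)) :
    Fintype.card E * ∑ ψ, F ψ * condAt g s (win p q k ψ) = ∑ ψ, F ψ := by
  refine card_mul_sum_mul_of_sum_update_eq_one ⟨k + s, hs⟩ hF fun ψ hψ ↦ ?_
  simp only [win_update]
  exact sum_condAt_update (hpos ψ hψ).ne'

end Windows

section ChainWeight

variable {E : Type} [Fintype E] [Nonempty E] {A B : ℤ} {p q : ℕ}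

/-- The analogue of `α_{W,i}` for the windows `a,...,b` with `a ≤ i ≤ b`: the weight of the window
`i`, extended to the left and to the right by conditional weights of the new end sites. -/
noncomputable def chainWeight (g : ℤ → Pat E (-(p : ℤ)) (q : ℤ) → ℝ) (i a b : ℤ)
    (ψ : Pat E A B) : ℝ :=
  (∏ k ∈ Finset.Icc a (i - 1), condAt (g k) (leftEnd p q) (win p q k ψ)) * g i (win p q i ψ) *
    ∏ l ∈ Finset.Icc (i + 1) b, condAt (g l) (rightEnd p q) (win p q l ψ)

lemma alpha_eq_chainWeight [DecidableEq E] (t u : ℤ) (g : ℤ → Pat E (-(p : ℤ)) (q : ℤ) → ℝ)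
    (i : ℤ) : alpha p q t u g i = chainWeight g i (-t) u := by
  ext ψ
  have left_sites : Finset.Icc (-(p : ℤ) + 1) (q : ℤ) =
      (Finset.Icc (-(p : ℤ)) (q : ℤ)).erase (leftEnd p q) := by
    ext; simp only [Finset.mem_erase, Finset.mem_Icc]; omega
  have right_sites : Finset.Icc (-(p : ℤ)) ((q : ℤ) - 1) =
      (Finset.Icc (-(p : ℤ)) (q : ℤ)).erase (rightEnd p q) := by
    ext; simp only [Finset.mem_erase, Finset.mem_Icc]; omega
  unfold alpha chainWeight
  congr! 3 with k _ l _
  · exact condPr_eq_condAt_win (g k) ψ k (leftEnd p q) left_sites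
  · exact condPr_eq_condAt_win (g l) ψ l (rightEnd p q) right_sites

variable {g : ℤ → Pat E (-(p : ℤ)) (q : ℤ) → ℝ} {i a b : ℤ}

lemma chainWeight_self (ψ : Pat E A B) : chainWeight g i i i ψ = g i (win p q i ψ) := by
  simp [chainWeight]

lemma chainWeight_add_one_right (hb : i ≤ b) (ψ : Pat E A B) :
    chainWeight g i a (b + 1) ψ =
      chainWeight g i a b ψ * condAt (g (b + 1)) (rightEnd p q) (win p q (b + 1) ψ) := by
  rw [chainWeight, ← Finset.insert_Icc_right_eq_Icc_add_one (by omega),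
    Finset.prod_insert (by simp), chainWeight]
  ring

lemma chainWeight_sub_one_left (ha : a ≤ i) (ψ : Pat E A B) :
    chainWeight g i (a - 1) b ψ =
      chainWeight g i a b ψ * condAt (g (a - 1)) (leftEnd p q) (win p q (a - 1) ψ) := by
  rw [chainWeight, ← Finset.insert_Icc_left_eq_Icc_sub_one (by omega),
    Finset.prod_insert (by simp), chainWeight]
  ring

lemma chainWeight_add_one_of_marginalOff_eq (ha : a ≤ i) (hb : i + 1 ≤ b) {ψ : Pat E A B}
    (h : marginalOff (g i) (leftEnd p q) (win p q i ψ) =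
      marginalOff (g (i + 1)) (rightEnd p q) (win p q (i + 1) ψ)) :
    chainWeight g (i + 1) a b ψ = chainWeight g i a b ψ := by
  have left_insert : Finset.Icc a (i + 1 - 1) = insert i (Finset.Icc a (i - 1)) := by
    ext; simp only [Finset.mem_insert, Finset.mem_Icc]; omega
  have right_insert : Finset.Icc (i + 1) b = insert (i + 1) (Finset.Icc (i + 1 + 1) b) := by
    ext; simp only [Finset.mem_insert, Finset.mem_Icc]; omega
  rw [chainWeight, chainWeight, left_insert, right_insert, Finset.prod_insert (by simp),
    Finset.prod_insert (by simp), condAt, condAt, h]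
  ring

lemma chainWeight_nonneg (hi : i ∈ Finset.Icc a b) (hg : ∀ k ∈ Finset.Icc a b, ∀ φ, 0 ≤ g k φ)
    (ψ : Pat E A B) : 0 ≤ chainWeight g i a b ψ := by
  obtain ⟨ha, hb⟩ := Finset.mem_Icc.1 hi
  refine mul_nonneg (mul_nonneg ?_ (hg i hi _)) ?_
  · exact Finset.prod_nonneg fun k hk ↦
      condAt_nonneg (hg k (Finset.Icc_subset_Icc_right (by omega) hk)) _ _
  · exact Finset.prod_nonneg fun l hl ↦
      condAt_nonneg (hg l (Finset.Icc_subset_Icc_left (by omega) hl)) _ _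

lemma ne_zero_of_chainWeight_ne_zero {ψ : Pat E A B} (h : chainWeight g i a b ψ ≠ 0) {k : ℤ}
    (hk : k ∈ Finset.Icc a b) : g k (win p q k ψ) ≠ 0 := by
  rw [chainWeight, mul_ne_zero_iff, mul_ne_zero_iff, Finset.prod_ne_zero_iff,
    Finset.prod_ne_zero_iff] at h
  rw [Finset.mem_Icc] at hk
  obtain hki | rfl | hik := lt_trichotomy k i
  · exact ne_zero_of_condAt_ne_zero (h.1.1 k (Finset.mem_Icc.2 ⟨hk.1, by omega⟩))
  · exact h.1.2
  · exact ne_zero_of_condAt_ne_zero (h.2 k (Finset.mem_Icc.2 ⟨by omega, hk.2⟩))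

lemma chainWeight_update_of_notMem (hi : i ∈ Finset.Icc a b) (ψ : Pat E A B)
    {j : {x // x ∈ Finset.Icc A B}} (hj : (j : ℤ) ∉ Finset.Icc (a - p) (b + q)) (e : E) :
    chainWeight g i a b (Function.update ψ j e) = chainWeight g i a b ψ := by
  have win_eq (k : ℤ) (hk : k ∈ Finset.Icc a b) :
      win p q k (Function.update ψ j e) = win p q k ψ := by
    refine win_update_of_notMem ψ (fun h ↦ hj ?_) e
    rw [Finset.mem_Icc] at hk
    exact Finset.Icc_subset_Icc (by omega) (by omega) h
  have hi' := Finset.mem_Icc.1 hi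
  unfold chainWeight
  congr 1
  · congr 1
    · exact Finset.prod_congr rfl fun k hk ↦ by
        rw [win_eq k (Finset.Icc_subset_Icc_right (by omega) hk)]
    · rw [win_eq i hi]
  · exact Finset.prod_congr rfl fun l hl ↦ by
      rw [win_eq l (Finset.Icc_subset_Icc_left (by omega) hl)]

end ChainWeight

section Extendable

variable {E : Type} [Fintype E] [DecidableEq E] [Nonempty E] {p q : ℕ} {t u : ℤ}
  {g : ℤ → Pat E (-(p : ℤ)) (q : ℤ) → ℝ}

lemma Extendable.marginalOff_pos (hext : Extendable p q t u g) {k m : ℤ}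
    (hk : k ∈ Finset.Icc (-t) u) (hm : m ∈ Finset.Icc (-t) u)
    (hgk : ∀ φ, 0 ≤ g k φ) (hgm : ∀ φ, 0 ≤ g m φ) {A B : ℤ} {ψ : Pat E A B}
    (hψ : g m (win p q m ψ) ≠ 0) {s : {x // x ∈ Finset.Icc (-(p : ℤ)) (q : ℤ)}}
    (hs : ∀ v, v ≠ s → k + v - m ∈ Finset.Icc (-(p : ℤ)) (q : ℤ)) :
    0 < marginalOff (g k) s (win p q k ψ) := by
  obtain ⟨χ, hχ, hχpos⟩ := hext m hm _ ((hgm _).lt_of_ne' hψ)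
  refine marginalOff_pos_of_forall_ne hgk (hχpos k hk) fun v hv ↦ ?_
  simpa [win] using congrFun hχ ⟨k + v - m, hs v hv⟩

lemma Extendable.card_mul_sum_chainWeight_add_one_right (hext : Extendable p q t u g)
    (hg : ∀ k ∈ Finset.Icc (-t) u, ∀ φ, 0 ≤ g k φ) {i a b : ℤ} (hi : i ∈ Finset.Icc a b)
    (ha : -t ≤ a) (hb : b + 1 ≤ u) :
    Fintype.card E *
        ∑ ψ : Pat E (-(p : ℤ) - t) ((q : ℤ) + u), chainWeight g i a (b + 1) ψ =
      ∑ ψ : Pat E (-(p : ℤ) - t) ((q : ℤ) + u), chainWeight g i a b ψ := by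
  have hi' := Finset.mem_Icc.1 hi
  have hbW : b ∈ Finset.Icc (-t) u := Finset.mem_Icc.2 ⟨by omega, by omega⟩
  have hbW' : b + 1 ∈ Finset.Icc (-t) u := Finset.mem_Icc.2 ⟨by omega, hb⟩
  simp only [chainWeight_add_one_right hi'.2]
  refine card_mul_sum_mul_condAt_win (g (b + 1)) (b + 1) (rightEnd p q)
    (Finset.mem_Icc.2 ⟨by dsimp only; omega, by dsimp only; omega⟩) ?_ ?_
  · refine fun ψ e ↦ chainWeight_update_of_notMem hi ψ ?_ e
    rw [Finset.mem_Icc]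
    dsimp only
    omega
  · refine fun ψ hψ ↦ hext.marginalOff_pos hbW' hbW (hg _ hbW') (hg _ hbW)
      (ne_zero_of_chainWeight_ne_zero hψ (Finset.mem_Icc.2 ⟨by omega, le_rfl⟩)) ?_
    rintro ⟨v, hv⟩ hne
    rw [Finset.mem_Icc] at hv ⊢
    have : v ≠ q := fun h ↦ hne (Subtype.ext h)
    dsimp only
    omega

lemma Extendable.card_mul_sum_chainWeight_sub_one_left (hext : Extendable p q t u g)
    (hg : ∀ k ∈ Finset.Icc (-t) u, ∀ φ, 0 ≤ g k φ) {i a b : ℤ} (hi : i ∈ Finset.Icc a b)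
    (ha : -t ≤ a - 1) (hb : b ≤ u) :
    Fintype.card E *
        ∑ ψ : Pat E (-(p : ℤ) - t) ((q : ℤ) + u), chainWeight g i (a - 1) b ψ =
      ∑ ψ : Pat E (-(p : ℤ) - t) ((q : ℤ) + u), chainWeight g i a b ψ := by
  have hi' := Finset.mem_Icc.1 hi
  have haW : a ∈ Finset.Icc (-t) u := Finset.mem_Icc.2 ⟨by omega, by omega⟩
  have haW' : a - 1 ∈ Finset.Icc (-t) u := Finset.mem_Icc.2 ⟨ha, by omega⟩
  simp only [chainWeight_sub_one_left hi'.1]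
  refine card_mul_sum_mul_condAt_win (g (a - 1)) (a - 1) (leftEnd p q)
    (Finset.mem_Icc.2 ⟨by dsimp only; omega, by dsimp only; omega⟩) ?_ ?_
  · refine fun ψ e ↦ chainWeight_update_of_notMem hi ψ ?_ e
    rw [Finset.mem_Icc]
    dsimp only
    omega
  · refine fun ψ hψ ↦ hext.marginalOff_pos haW' haW (hg _ haW') (hg _ haW)
      (ne_zero_of_chainWeight_ne_zero hψ (Finset.mem_Icc.2 ⟨le_rfl, by omega⟩)) ?_
    rintro ⟨v, hv⟩ hne
    rw [Finset.mem_Icc] at hv ⊢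
    have : v ≠ -p := fun h ↦ hne (Subtype.ext h)
    dsimp only
    omega

lemma Extendable.card_zpow_mul_sum_chainWeight (hext : Extendable p q t u g)
    (hg : ∀ k ∈ Finset.Icc (-t) u, ∀ φ, 0 ≤ g k φ) {i a b : ℤ} (hat : -t ≤ a) (hai : a ≤ i)
    (hib : i ≤ b) (hbu : b ≤ u) :
    (Fintype.card E : ℝ) ^ (b - a) *
        ∑ ψ : Pat E (-(p : ℤ) - t) ((q : ℤ) + u), chainWeight g i a b ψ =
      ∑ ψ : Pat E (-(p : ℤ) - t) ((q : ℤ) + u), g i (win p q i ψ) := by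
  have hE : (Fintype.card E : ℝ) ≠ 0 := Nat.cast_ne_zero.2 Fintype.card_ne_zero
  induction b, hib using Int.leInduction with
  | base =>
    induction a, hai using Int.leInductionDown with
    | base => simp [chainWeight_self]
    | pred a hai ih =>
      rw [← ih (by omega), show i - (a - 1) = i - a + 1 by ring, zpow_add_one₀ hE, mul_assoc,
        hext.card_mul_sum_chainWeight_sub_one_left hg (Finset.mem_Icc.2 ⟨hai, le_rfl⟩) hat hbu]
  | succ b hib ih =>
    rw [← ih (by omega), show b + 1 - a = b - a + 1 by ring, zpow_add_one₀ hE, mul_assoc,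
      hext.card_mul_sum_chainWeight_add_one_right hg (Finset.mem_Icc.2 ⟨hai, hib⟩) hat hbu]

lemma Extendable.isDensity_alpha (hext : Extendable p q t u g)
    (hg : ∀ j ∈ Finset.Icc (-t) u, IsDensity (g j)) {i : ℤ} (hi : i ∈ Finset.Icc (-t) u) :
    IsDensity (alpha p q t u g i) := by
  have hE : (Fintype.card E : ℝ) ≠ 0 := Nat.cast_ne_zero.2 Fintype.card_ne_zero
  have hg_nonneg : ∀ j ∈ Finset.Icc (-t) u, ∀ φ, 0 ≤ g j φ := fun j hj ↦ (hg j hj).1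
  obtain ⟨hti, hiu⟩ := Finset.mem_Icc.1 hi
  rw [alpha_eq_chainWeight]
  refine ⟨chainWeight_nonneg hi hg_nonneg, mul_left_cancel₀ (zpow_ne_zero (u - -t) hE) ?_⟩
  rw [hext.card_zpow_mul_sum_chainWeight hg_nonneg le_rfl hti hiu le_rfl,
    sum_comp_win (by omega) (by omega), (hg i hi).2]
  congr 2
  ring

end Extendable

section OverlapConsistent

variable {E : Type} [Fintype E] [Nonempty E] {p q : ℕ} {t u : ℤ}

/-- For consecutive windows `i`, `i + 1` in `W`, the marginal of `g(i)` on `V_+` and the marginal of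
`g(i+1)` on `V_-` agree on the overlap of the two windows. The overlap is read off a pattern on
`V + W`, so that no separate type of patterns on `V_+` is needed. -/
def OverlapConsistent (p q : ℕ) (t u : ℤ) (g : ℤ → Pat E (-(p : ℤ)) (q : ℤ) → ℝ) : Prop :=
  ∀ i, -t ≤ i → i + 1 ≤ u → ∀ ψ : Pat E (-(p : ℤ) - t) ((q : ℤ) + u),
    marginalOff (g i) (leftEnd p q) (win p q i ψ) =
      marginalOff (g (i + 1)) (rightEnd p q) (win p q (i + 1) ψ)

variable [DecidableEq E]

lemma overlapConsistent_beta (g : Pat E (-(p : ℤ) - t) ((q : ℤ) + u) → ℝ) :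
    OverlapConsistent p q t u (beta p q t u g) := by
  intro i _ _ ψ
  have agree_iff (χ : Pat E (-(p : ℤ) - t) ((q : ℤ) + u)) :
      (∀ v, v ≠ leftEnd p q → win p q i χ v = win p q i ψ v) ↔
        ∀ v, v ≠ rightEnd p q → win p q (i + 1) χ v = win p q (i + 1) ψ v := by
    simp only [win, Subtype.forall, ne_eq, Subtype.ext_iff, Finset.mem_Icc]
    constructor <;> intro h v hv hne
    · rw [show i + 1 + v = i + (v + 1) by ring]
      exact h (v + 1) (by omega) (by omega)
    · rw [show i + v = i + 1 + (v - 1) by ring]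
      exact h (v - 1) (by omega) (by omega)
  simp only [marginalOff, beta, sum_pr_update, agree_iff]

lemma OverlapConsistent.alpha_eq_alpha {g : ℤ → Pat E (-(p : ℤ)) (q : ℤ) → ℝ}
    (h : OverlapConsistent p q t u g) {i j : ℤ} (hi : i ∈ Finset.Icc (-t) u)
    (hj : j ∈ Finset.Icc (-t) u) : alpha p q t u g i = alpha p q t u g j := by
  suffices alpha_eq_first : ∀ k, -t ≤ k → k ≤ u → alpha p q t u g k = alpha p q t u g (-t) by
    rw [Finset.mem_Icc] at hi hj
    rw [alpha_eq_first i hi.1 hi.2, alpha_eq_first j hj.1 hj.2]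
  intro k htk hku
  induction k, htk using Int.leInduction with
  | base => rfl
  | succ k htk ih =>
    rw [← ih (by omega), alpha_eq_chainWeight, alpha_eq_chainWeight]
    exact funext fun ψ ↦ chainWeight_add_one_of_marginalOff_eq htk hku (h k htk hku ψ)

end OverlapConsistent

lemma IsDensity.average {ι α : Type} [Fintype α] {s : Finset ι} (hs : s.Nonempty) {f : ι → α → ℝ}
    (hf : ∀ i ∈ s, IsDensity (f i)) : IsDensity fun x ↦ (s.card : ℝ)⁻¹ * ∑ i ∈ s, f i x := by
  refine ⟨fun x ↦ mul_nonneg (by positivity) (Finset.sum_nonneg fun i hi ↦ (hf i hi).1 x), ?_⟩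
  rw [← Finset.mul_sum, Finset.sum_comm, Finset.sum_congr rfl fun i hi ↦ (hf i hi).2]
  simp [hs.card_ne_zero]

theorem stmt_10_general
    (E : Type) [Fintype E] [DecidableEq E] [Nonempty E]
    (p q : ℕ) (t u : ℤ) (htu : -t ≤ u) :
    (∀ g : ℤ → Pat E (-(p : ℤ)) (q : ℤ) → ℝ,
      (∀ j ∈ Finset.Icc (-t) u, IsDensity (g j)) → Extendable p q t u g →
      IsDensity (alphaBar p q t u g)) ∧
    (∀ g : ℤ → Pat E (-(p : ℤ)) (q : ℤ) → ℝ, OverlapConsistent p q t u g →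
      ∀ i ∈ Finset.Icc (-t) u, alphaBar p q t u g = alpha p q t u g i) := by
  have hW : (Finset.Icc (-t) u).Nonempty := Finset.nonempty_Icc.2 htu
  refine ⟨fun g hg hext ↦ IsDensity.average hW fun i hi ↦ hext.isDensity_alpha hg hi,
    fun g hcons i hi ↦ funext fun ψ ↦ ?_⟩
  have average_const : ∑ j ∈ Finset.Icc (-t) u, alpha p q t u g j ψ =
      (Finset.Icc (-t) u).card * alpha p q t u g i ψ := by
    rw [Finset.sum_congr rfl fun j hj ↦ congrFun (hcons.alpha_eq_alpha hj hi) ψ,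
      Finset.sum_const, nsmul_eq_mul]
  rw [alphaBar, average_const, inv_mul_cancel_left₀ (Nat.cast_ne_zero.2 hW.card_ne_zero)]

/-- properties of the averaged reconstruction `α_W`. -/
theorem stmt_10
    (E : Type) [Fintype E] [DecidableEq E] [Nonempty E]
    (p q : ℕ) (t u : ℤ) (htu : -t ≤ u) :
    (∀ g : ℤ → Pat E (-(p : ℤ)) (q : ℤ) → ℝ,
      (∀ j ∈ Finset.Icc (-t) u, IsDensity (g j)) → Extendable p q t u g →
      IsDensity (alphaBar p q t u g)) ∧
    (∀ gtil : Pat E (-(p : ℤ) - t) ((q : ℤ) + u) → ℝ, IsDensity gtil →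
      ∀ i ∈ Finset.Icc (-t) u,
        alphaBar p q t u (beta p q t u gtil) = alpha p q t u (beta p q t u gtil) i) :=
  ⟨(stmt_10_general E p q t u htu).1, fun gtil _ ↦
    (stmt_10_general E p q t u htu).2 _ (overlapConsistent_beta gtil)⟩
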